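/- Let n ≥ 3. Consider the two curve-germs in ℝ^{2n} (coordinates (p₁,q₁,p₂,q₂,p₃,q₃,…,pₙ,qₙ), all unlisted coordinates equal to 0): B₁(t) = (t³, −(1/3)t⁶, 0, 0, −t², 0, …, 0) and B₂(t) = (t³, 0, −t², 0, 0, 0, …, 0) (the class (T₇)⁶). Then Lt(B₁,B₂) = 7, while Lt(B₁) = ∞ and Lt(B₂) = ∞. -/

import Mathlib

noncomputable section

/-- The order of vanishing at `0` of a function `h : ℝ → ℝ`: the least `k ≥ 1` such that
the `k`-th derivative of `h` at `0` is nonzero, and `∞` if all derivatives vanish at `0`. -/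
def vanishOrder (h : ℝ → ℝ) : ℕ∞ :=
  sInf {k : ℕ∞ | ∃ m : ℕ, k = m ∧ 1 ≤ m ∧ iteratedDeriv m h 0 ≠ 0}

/-- The standard symplectic form `ω = ∑ dpᵢ ∧ dqᵢ` on `ℝ^{2n}`, where the coordinates are
ordered as `(p₁, q₁, …, pₙ, qₙ)` (so `pᵢ` has index `2(i-1)` and `qᵢ` has index `2(i-1)+1`). -/
def stdSymp (n : ℕ) (u v : Fin (2 * n) → ℝ) : ℝ :=
  ∑ i : Fin n,
    (u ⟨2 * i.val, by have := i.isLt; omega⟩ * v ⟨2 * i.val + 1, by have := i.isLt; omega⟩ -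
     u ⟨2 * i.val + 1, by have := i.isLt; omega⟩ * v ⟨2 * i.val, by have := i.isLt; omega⟩)

/-- A germ at `0` of a smooth Lagrangian submanifold of `(ℝ^{2n}, ω)`, given by `n` smooth
functions `H₁, …, Hₙ` vanishing at `0`, whose differentials are linearly independent at the
points of `{H₁ = ⋯ = Hₙ = 0}` near `0`, and such that `ω` vanishes on `ker DH(x)` at every
such point. -/
structure LagrangianGerm (n : ℕ) : Type where
  H : Fin n → (Fin (2 * n) → ℝ) → ℝ
  smooth : ∀ i, ContDiff ℝ (⊤ : ℕ∞) (H i)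
  zero_at_zero : ∀ i, H i 0 = 0
  lagrangian : ∃ U : Set (Fin (2 * n) → ℝ), IsOpen U ∧ 0 ∈ U ∧
    ∀ x ∈ U, (∀ i, H i x = 0) →
      LinearIndependent ℝ (fun i => fderiv ℝ (H i) x) ∧
      ∀ u v : Fin (2 * n) → ℝ, (∀ i, fderiv ℝ (H i) x u = 0) →
        (∀ i, fderiv ℝ (H i) x v = 0) → stdSymp n u v = 0

/-- The tangency order `t(f, L)` of a curve `f` to a Lagrangian submanifold-germ `L`:
the minimum over `i` of the order of vanishing at `0` of `Hᵢ ∘ f`. -/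
def tOrd {n : ℕ} (f : ℝ → Fin (2 * n) → ℝ) (L : LagrangianGerm n) : ℕ∞ :=
  ⨅ i : Fin n, vanishOrder (fun t => L.H i (f t))

/-- The Lagrangian tangency order `Lt(f)` of a curve `f`. -/
def Lt1 {n : ℕ} (f : ℝ → Fin (2 * n) → ℝ) : ℕ∞ :=
  ⨆ L : LagrangianGerm n, tOrd f L

/-- The Lagrangian tangency order `Lt(f, g)` of a multi-germ of two curves. -/
def Lt2 {n : ℕ} (f g : ℝ → Fin (2 * n) → ℝ) : ℕ∞ :=
  ⨆ L : LagrangianGerm n, min (tOrd f L) (tOrd g L)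

/-- The Lagrangian tangency order `Lt(f, g, h)` of a multi-germ of three curves. -/
def Lt3 {n : ℕ} (f g h : ℝ → Fin (2 * n) → ℝ) : ℕ∞ :=
  ⨆ L : LagrangianGerm n, min (tOrd f L) (min (tOrd g L) (tOrd h L))

/-!
Near `0` a Lagrangian germ `L` is the graph of the gradient of a function `S` over its tangent
space, along a transverse Lagrangian subspace. If `L` meets the branch with
`(pᵢ, pⱼ) = (t³, -t²)` and `qᵢ = κ t⁶` to order above `7`, then its tangent space contains `∂/∂pᵢ`
and `∂/∂pⱼ`. Writing `x = pᵢ`, `z = pⱼ`, the coefficient of `t⁷` in `S_z (t³, -t²)` is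
`S_xzzz(0) / 2`, which therefore vanishes, and then the coefficient of `t⁶` in
`S_x (t³, -t²)`, namely `S_xxx(0) / 2 - S_xzzz(0) / 6`, must be `κ`. So `S_xxx(0) = 2κ`. This number
only involves the direction of `pᵢ`, which both branches share, while their values of `κ` are `-1/3`
and `0`; hence the order `7` cannot be exceeded. It is attained for `S = p₁ p₃³ / 3`, and
`S = κ pᵢ³ / 3` generates a germ containing a given single branch.
-/

open scoped ContDiff

section Flatness

open Filter Topology Asymptotics

variable {E : Type*} [NormedAddCommGroup E] [NormedSpace ℝ E] {f : ℝ → E} {k : ℕ}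

lemma pow_isBigO_pow_nhds_zero {j k : ℕ} (h : j ≤ k) :
    (fun t : ℝ ↦ t ^ k) =O[𝓝 0] fun t ↦ t ^ j := by
  rcases h.eq_or_lt with rfl | hlt
  · exact isBigO_refl _ _
  · exact (isLittleO_pow_pow hlt).isBigO

lemma sub_sum_iteratedDeriv_isLittleO (hf : ContDiffAt ℝ k f 0) :
    (fun t ↦ f t - ∑ j ∈ Finset.range (k + 1),
      ((j.factorial : ℝ)⁻¹ * t ^ j) • iteratedDeriv j f 0) =o[𝓝 0] fun t ↦ t ^ k := by
  obtain ⟨ε, hε, hball⟩ := Metric.eventually_nhds_iff_ball.1 (hf.eventually (by simp))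
  have hmem : (0 : ℝ) ∈ Metric.ball 0 ε := Metric.mem_ball_self hε
  have htaylor := taylor_isLittleO (convex_ball 0 ε) hmem fun x hx ↦ (hball x hx).contDiffWithinAt
  simpa only [Metric.isOpen_ball.nhdsWithin_eq hmem, taylor_within_apply, sub_zero,
    iteratedDerivWithin_of_isOpen Metric.isOpen_ball hmem] using htaylor

lemma eq_zero_of_pow_smul_isLittleO {c : E}
    (h : (fun t : ℝ ↦ t ^ k • c) =o[𝓝 0] fun t ↦ t ^ k) : c = 0 := by
  have hconst : (fun _ ↦ c) =o[𝓝[≠] (0 : ℝ)] fun _ ↦ (1 : ℝ) := by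
    refine ((isBigO_refl (fun t : ℝ ↦ (t ^ k)⁻¹) _).smul_isLittleO
      (h.mono nhdsWithin_le_nhds)).congr' ?_ ?_
    all_goals
      filter_upwards [self_mem_nhdsWithin] with t ht
      simp [inv_smul_smul₀, pow_ne_zero k ht]
  exact tendsto_nhds_unique tendsto_const_nhds ((isLittleO_one_iff ℝ).1 hconst)

theorem isLittleO_pow_iff_iteratedDeriv_eq_zero (hf : ContDiffAt ℝ k f 0) :
    f =o[𝓝 0] (fun t ↦ t ^ k) ↔ ∀ j ≤ k, iteratedDeriv j f 0 = 0 := by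
  constructor
  · intro h j
    induction j using Nat.strong_induction_on with
    | _ j ih =>
      intro hjk
      have hterm : (fun t : ℝ ↦ t ^ j • ((j.factorial : ℝ)⁻¹ • iteratedDeriv j f 0))
          =o[𝓝 0] fun t ↦ t ^ j := by
        have htaylor := sub_sum_iteratedDeriv_isLittleO (hf.of_le (Nat.cast_le.2 hjk))
        refine ((h.trans_isBigO (pow_isBigO_pow_nhds_zero hjk)).sub htaylor).congr_left fun t ↦ ?_
        rw [Finset.sum_range_succ, Finset.sum_eq_zero fun i hi ↦ ?_, zero_add, sub_sub_cancel,
          mul_smul, smul_comm]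
        have hij := Finset.mem_range.1 hi
        rw [ih i hij (hij.le.trans hjk), smul_zero]
      simpa [Nat.factorial_ne_zero] using eq_zero_of_pow_smul_isLittleO hterm
  · intro h
    refine (sub_sum_iteratedDeriv_isLittleO hf).congr_left fun t ↦ ?_
    rw [Finset.sum_eq_zero fun j hj ↦ ?_, sub_zero]
    rw [h j (Finset.mem_range_succ_iff.1 hj), smul_zero]

lemma isLittleO_pow_of_lt_vanishOrder {h : ℝ → ℝ} (hs : ContDiffAt ℝ k h 0) (h0 : h 0 = 0)
    (hk : k < vanishOrder h) : h =o[𝓝 0] fun t ↦ t ^ k := by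
  refine (isLittleO_pow_iff_iteratedDeriv_eq_zero hs).2 fun j hj ↦ ?_
  rcases Nat.eq_zero_or_pos j with rfl | hpos
  · simpa using h0
  · by_contra hne
    have hle : vanishOrder h ≤ j := sInf_le ⟨j, rfl, hpos, hne⟩
    exact (hk.trans_le hle).not_ge (Nat.cast_le.2 hj)

lemma le_vanishOrder_const_mul_pow (c : ℝ) (k : ℕ) : k ≤ vanishOrder (fun t ↦ c * t ^ k) := by
  refine le_sInf ?_
  rintro _ ⟨m, rfl, -, hne⟩
  obtain rfl : m = k := by
    by_contra hmk
    rw [iteratedDeriv_const_mul_field, iteratedDeriv_fun_pow_zero, if_neg hmk] at hne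
    simp at hne
  exact le_rfl

lemma vanishOrder_zero : vanishOrder (fun _ ↦ 0) = ⊤ := by
  rw [vanishOrder, sInf_eq_top]
  rintro _ ⟨m, rfl, -, hne⟩
  simp at hne

end Flatness

section CuspJets

open Filter Topology Asymptotics

variable {E : Type*} [NormedAddCommGroup E] [NormedSpace ℝ E] {F : E → ℝ}

/-- The derivative of `F` in the direction `v`, as a function of the base point, so that it can be
iterated. -/
def dirDeriv (v : E) (F : E → ℝ) (x : E) : ℝ := fderiv ℝ F x v

lemma contDiffAt_dirDeriv {x : E} (v : E) (hF : ContDiffAt ℝ ∞ F x) :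
    ContDiffAt ℝ ∞ (dirDeriv v F) x :=
  (hF.fderiv_right (m := ∞) le_rfl).clm_apply contDiffAt_const

lemma contDiff_dirDeriv (v : E) (hF : ContDiff ℝ ∞ F) : ContDiff ℝ ∞ (dirDeriv v F) :=
  contDiff_iff_contDiffAt.2 fun _ ↦ contDiffAt_dirDeriv v hF.contDiffAt

lemma dirDeriv_apply {ι : Type*} [Finite ι] {G : E → ι → ℝ} {x : E} (v : E)
    (hG : DifferentiableAt ℝ G x) (l : ι) :
    dirDeriv v (fun y ↦ G y l) x = fderiv ℝ G x v l := by
  have := Fintype.ofFinite ι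
  rw [dirDeriv, (hasFDerivAt_pi'.1 hG.hasFDerivAt l).fderiv]
  rfl

lemma dirDeriv_congr {G : E → ℝ} {x : E} (v : E) (h : F =ᶠ[𝓝 x] G) :
    dirDeriv v F =ᶠ[𝓝 x] dirDeriv v G :=
  h.fderiv.fun_comp (· v)

lemma dirDeriv_dirDeriv {x : E} (u v : E) (hF : ContDiffAt ℝ 2 F x) :
    dirDeriv u (dirDeriv v F) x = fderiv ℝ (fderiv ℝ F) x u v := by
  have hdiff : DifferentiableAt ℝ (fderiv ℝ F) x :=
    (hF.fderiv_right (m := 1) (by norm_num)).differentiableAt one_ne_zero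
  have hd : HasFDerivAt (dirDeriv v F) _ x := hdiff.hasFDerivAt.clm_apply (hasFDerivAt_const v x)
  rw [dirDeriv, hd.fderiv]
  simp

lemma dirDeriv_comm {x : E} (u v : E) (hF : ContDiffAt ℝ 2 F x) :
    dirDeriv u (dirDeriv v F) x = dirDeriv v (dirDeriv u F) x := by
  rw [dirDeriv_dirDeriv u v hF, dirDeriv_dirDeriv v u hF]
  exact hF.isSymmSndFDerivAt (by simp) u v

lemma iteratedDeriv_pow_mul_zero {g : ℝ → ℝ} {n : ℕ} (hg : ContDiffAt ℝ n g 0) (m : ℕ) :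
    iteratedDeriv n (fun t ↦ t ^ m * g t) 0 =
      n.descFactorial m * iteratedDeriv (n - m) g 0 := by
  rw [iteratedDeriv_fun_mul (by fun_prop) hg]
  simp only [iteratedDeriv_fun_pow_zero]
  rw [Finset.sum_eq_single m]
  · simp [Nat.descFactorial_eq_factorial_mul_choose, mul_comm]
  · intro j _ hj
    simp [hj]
  · intro hm
    simp [Nat.choose_eq_zero_of_lt (by simpa using hm : n < m)]

/-- The semicubical cusp in the plane spanned by `a` and `b`; the sign is the one of the
normal form. -/
def cusp (a b : E) (t : ℝ) : E := t ^ 3 • a - t ^ 2 • b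

variable (a b : E)

lemma contDiff_cusp {n : WithTop ℕ∞} : ContDiff ℝ n (cusp a b) := by
  unfold cusp
  fun_prop

lemma cusp_zero : cusp a b 0 = 0 := by simp [cusp]

lemma tendsto_cusp : Tendsto (cusp a b) (𝓝 0) (𝓝 0) := by
  simpa [cusp_zero] using (contDiff_cusp a b (n := 0)).continuous.tendsto 0

lemma hasDerivAt_cusp (t : ℝ) : HasDerivAt (cusp a b) ((3 * t ^ 2) • a - (2 * t) • b) t := by
  refine (((hasDerivAt_pow 3 t).smul_const a).sub
    ((hasDerivAt_pow 2 t).smul_const b)).congr_deriv ?_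
  norm_num

lemma contDiffAt_comp_cusp (hF : ContDiffAt ℝ ∞ F 0) :
    ContDiffAt ℝ ∞ (fun t ↦ F (cusp a b t)) 0 := by
  refine ContDiffAt.comp (0 : ℝ) ?_ (contDiff_cusp a b).contDiffAt
  rwa [cusp_zero]

lemma deriv_comp_cusp (hF : ContDiffAt ℝ 1 F 0) :
    deriv (fun t ↦ F (cusp a b t)) =ᶠ[𝓝 0] fun t ↦
      3 * (t ^ 2 * dirDeriv a F (cusp a b t)) - 2 * (t ^ 1 * dirDeriv b F (cusp a b t)) := by
  filter_upwards [(tendsto_cusp a b).eventually (hF.eventually (by simp))] with t ht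
  have hchain := (ht.differentiableAt one_ne_zero).hasFDerivAt.comp_hasDerivAt t
    (hasDerivAt_cusp a b t)
  rw [show deriv (fun t ↦ F (cusp a b t)) t = _ from hchain.deriv]
  simp only [dirDeriv, map_sub, map_smul, smul_eq_mul]
  ring

variable {a b}

/-- The coefficients vanish whenever one of the truncated subtractions `n - 2`, `n - 1` is not the
true one. -/
lemma iteratedDeriv_succ_comp_cusp (hF : ContDiffAt ℝ ∞ F 0) (n : ℕ) :
    iteratedDeriv (n + 1) (fun t ↦ F (cusp a b t)) 0 =
      3 * (n.descFactorial 2 * iteratedDeriv (n - 2) (fun t ↦ dirDeriv a F (cusp a b t)) 0) -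
      2 * (n.descFactorial 1 * iteratedDeriv (n - 1) (fun t ↦ dirDeriv b F (cusp a b t)) 0) := by
  have ha := contDiffAt_infty.1 (contDiffAt_comp_cusp a b (contDiffAt_dirDeriv a hF)) n
  have hb := contDiffAt_infty.1 (contDiffAt_comp_cusp a b (contDiffAt_dirDeriv b hF)) n
  rw [iteratedDeriv_succ',
    (deriv_comp_cusp a b (contDiffAt_infty.1 hF 1)).iteratedDeriv_eq,
    iteratedDeriv_fun_sub (by fun_prop) (by fun_prop), iteratedDeriv_const_mul_field,
    iteratedDeriv_const_mul_field, iteratedDeriv_pow_mul_zero ha, iteratedDeriv_pow_mul_zero hb]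

lemma iteratedDeriv_one_comp_cusp (hF : ContDiffAt ℝ ∞ F 0) :
    iteratedDeriv 1 (fun t ↦ F (cusp a b t)) 0 = 0 := by
  simp [iteratedDeriv_succ_comp_cusp hF 0]

lemma iteratedDeriv_two_comp_cusp (hF : ContDiffAt ℝ ∞ F 0) :
    iteratedDeriv 2 (fun t ↦ F (cusp a b t)) 0 = -2 * dirDeriv b F 0 := by
  simp [iteratedDeriv_succ_comp_cusp hF 1, cusp_zero]

lemma iteratedDeriv_three_comp_cusp (hF : ContDiffAt ℝ ∞ F 0) :
    iteratedDeriv 3 (fun t ↦ F (cusp a b t)) 0 = 6 * dirDeriv a F 0 := by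
  rw [iteratedDeriv_succ_comp_cusp hF 2, iteratedDeriv_one_comp_cusp (contDiffAt_dirDeriv b hF)]
  norm_num [cusp_zero, Nat.descFactorial, ← mul_assoc]

lemma iteratedDeriv_four_comp_cusp (hF : ContDiffAt ℝ ∞ F 0) :
    iteratedDeriv 4 (fun t ↦ F (cusp a b t)) 0 = 12 * dirDeriv b (dirDeriv b F) 0 := by
  rw [iteratedDeriv_succ_comp_cusp hF 3, iteratedDeriv_one_comp_cusp (contDiffAt_dirDeriv a hF),
    iteratedDeriv_two_comp_cusp (contDiffAt_dirDeriv b hF)]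
  simp only [Nat.descFactorial, Nat.add_one_sub_one, tsub_zero, mul_one, Nat.reduceMul,
    Nat.cast_ofNat]
  ring

lemma iteratedDeriv_five_comp_cusp (hF : ContDiffAt ℝ ∞ F 0) :
    iteratedDeriv 5 (fun t ↦ F (cusp a b t)) 0 = -120 * dirDeriv b (dirDeriv a F) 0 := by
  rw [iteratedDeriv_succ_comp_cusp hF 4, iteratedDeriv_two_comp_cusp (contDiffAt_dirDeriv a hF),
    iteratedDeriv_three_comp_cusp (contDiffAt_dirDeriv b hF),
    dirDeriv_comm a b (contDiffAt_infty.1 hF 2)]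
  simp only [Nat.descFactorial, Nat.add_one_sub_one, tsub_zero, mul_one, Nat.reduceMul,
    Nat.cast_ofNat]
  ring

lemma iteratedDeriv_six_comp_cusp (hF : ContDiffAt ℝ ∞ F 0) :
    iteratedDeriv 6 (fun t ↦ F (cusp a b t)) 0 =
      360 * dirDeriv a (dirDeriv a F) 0 - 120 * dirDeriv b (dirDeriv b (dirDeriv b F)) 0 := by
  rw [iteratedDeriv_succ_comp_cusp hF 5, iteratedDeriv_three_comp_cusp (contDiffAt_dirDeriv a hF),
    iteratedDeriv_four_comp_cusp (contDiffAt_dirDeriv b hF)]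
  simp only [Nat.descFactorial, Nat.add_one_sub_one, tsub_zero, mul_one, Nat.reduceMul,
    Nat.cast_ofNat]
  ring

lemma iteratedDeriv_seven_comp_cusp (hF : ContDiffAt ℝ ∞ F 0) :
    iteratedDeriv 7 (fun t ↦ F (cusp a b t)) 0 =
      2520 * dirDeriv b (dirDeriv b (dirDeriv a F)) 0 := by
  have hcomm : dirDeriv a (dirDeriv b F) =ᶠ[𝓝 0] dirDeriv b (dirDeriv a F) := by
    filter_upwards [(contDiffAt_infty.1 hF 2).eventually (by simp)] with x hx
    exact dirDeriv_comm a b hx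
  rw [iteratedDeriv_succ_comp_cusp hF 6, iteratedDeriv_four_comp_cusp (contDiffAt_dirDeriv a hF),
    iteratedDeriv_five_comp_cusp (contDiffAt_dirDeriv b hF),
    (dirDeriv_congr b hcomm).self_of_nhds]
  simp only [Nat.descFactorial, Nat.add_one_sub_one, tsub_zero, mul_one, Nat.reduceMul,
    Nat.cast_ofNat]
  ring

lemma dirDeriv_eq_zero_of_comp_cusp_isLittleO (hF : ContDiffAt ℝ ∞ F 0)
    (h : (fun t ↦ F (cusp a b t)) =o[𝓝 0] fun t ↦ t ^ 3) :
    dirDeriv a F 0 = 0 ∧ dirDeriv b F 0 = 0 := by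
  have hjet := (isLittleO_pow_iff_iteratedDeriv_eq_zero
    (contDiffAt_infty.1 (contDiffAt_comp_cusp a b hF) 3)).1 h
  have h2 := hjet 2 (by norm_num)
  have h3 := hjet 3 le_rfl
  rw [iteratedDeriv_two_comp_cusp hF] at h2
  rw [iteratedDeriv_three_comp_cusp hF] at h3
  constructor <;> linarith

/-- With `∂b P = ∂a Q`, the coefficient of `t ^ 7` in `Q ∘ cusp` is a multiple of `∂b³ P`, the only
other derivative entering the coefficient of `t ^ 6` in `P ∘ cusp`. -/
theorem dirDeriv_dirDeriv_eq_of_comp_cusp_isLittleO {P Q : E → ℝ} {κ : ℝ}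
    (hP : ContDiffAt ℝ ∞ P 0) (hQ : ContDiffAt ℝ ∞ Q 0)
    (hclosed : dirDeriv b P =ᶠ[𝓝 0] dirDeriv a Q)
    (hPcusp : (fun t ↦ P (cusp a b t) - κ * t ^ 6) =o[𝓝 0] fun t ↦ t ^ 6)
    (hQcusp : (fun t ↦ Q (cusp a b t)) =o[𝓝 0] fun t ↦ t ^ 7) :
    dirDeriv a (dirDeriv a P) 0 = 2 * κ := by
  have hPsmooth := contDiffAt_infty.1 (contDiffAt_comp_cusp a b hP) 6
  have hP6 : iteratedDeriv 6 (fun t ↦ P (cusp a b t)) 0 = 720 * κ := by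
    have hjet := (isLittleO_pow_iff_iteratedDeriv_eq_zero
      (hPsmooth.sub (by fun_prop))).1 hPcusp 6 le_rfl
    rw [iteratedDeriv_fun_sub hPsmooth (by fun_prop), iteratedDeriv_const_mul_field,
      iteratedDeriv_fun_pow_zero, sub_eq_zero] at hjet
    simpa [Nat.factorial, mul_comm] using hjet
  have hQ7 : iteratedDeriv 7 (fun t ↦ Q (cusp a b t)) 0 = 0 :=
    (isLittleO_pow_iff_iteratedDeriv_eq_zero
      (contDiffAt_infty.1 (contDiffAt_comp_cusp a b hQ) 7)).1 hQcusp 7 le_rfl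
  have hPbbb : dirDeriv b (dirDeriv b (dirDeriv b P)) 0 =
      dirDeriv b (dirDeriv b (dirDeriv a Q)) 0 :=
    (dirDeriv_congr b (dirDeriv_congr b hclosed)).self_of_nhds
  rw [iteratedDeriv_six_comp_cusp hP] at hP6
  rw [iteratedDeriv_seven_comp_cusp hQ] at hQ7
  linarith

end CuspJets

section SymplecticLinearAlgebra

variable {n : ℕ}

/-- The position of the coordinate `pᵢ`. -/
def pIdx (i : Fin n) : Fin (2 * n) := ⟨2 * i, by omega⟩

/-- The position of the coordinate `qᵢ`. -/
def qIdx (i : Fin n) : Fin (2 * n) := ⟨2 * i + 1, by omega⟩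

lemma pIdx_inj {i j : Fin n} : pIdx i = pIdx j ↔ i = j := by
  simp [pIdx, Fin.ext_iff]

lemma qIdx_inj {i j : Fin n} : qIdx i = qIdx j ↔ i = j := by
  simp [qIdx, Fin.ext_iff]

lemma pIdx_ne_qIdx (i j : Fin n) : pIdx i ≠ qIdx j := by
  simp only [pIdx, qIdx, ne_eq, Fin.ext_iff]
  omega

lemma ext_pIdx_qIdx {u v : Fin (2 * n) → ℝ} (hp : ∀ i, u (pIdx i) = v (pIdx i))
    (hq : ∀ i, u (qIdx i) = v (qIdx i)) : u = v := by
  ext j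
  rcases Nat.even_or_odd' j with ⟨k, hk | hk⟩
  · rw [show j = pIdx ⟨k, by omega⟩ from Fin.ext hk, hp]
  · rw [show j = qIdx ⟨k, by omega⟩ from Fin.ext hk, hq]

lemma stdSymp_eq_sum (u v : Fin (2 * n) → ℝ) :
    stdSymp n u v = ∑ i, (u (pIdx i) * v (qIdx i) - u (qIdx i) * v (pIdx i)) := rfl

lemma stdSymp_add_left (u u' v : Fin (2 * n) → ℝ) :
    stdSymp n (u + u') v = stdSymp n u v + stdSymp n u' v := by
  simp only [stdSymp_eq_sum, ← Finset.sum_add_distrib, Pi.add_apply]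
  exact Finset.sum_congr rfl fun i _ ↦ by ring

lemma stdSymp_swap (u v : Fin (2 * n) → ℝ) : stdSymp n u v = -stdSymp n v u := by
  simp only [stdSymp_eq_sum, ← Finset.sum_neg_distrib]
  exact Finset.sum_congr rfl fun i _ ↦ by ring

lemma stdSymp_add_right (u v v' : Fin (2 * n) → ℝ) :
    stdSymp n u (v + v') = stdSymp n u v + stdSymp n u v' := by
  rw [stdSymp_swap, stdSymp_add_left, stdSymp_swap u v, stdSymp_swap u v', neg_add]

/-- The coordinate vector in the direction `pᵢ`. -/
def pVec (i : Fin n) : Fin (2 * n) → ℝ := Pi.single (pIdx i) 1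

/-- The coordinate vector in the direction `qᵢ`. -/
def qVec (i : Fin n) : Fin (2 * n) → ℝ := Pi.single (qIdx i) 1

lemma pVec_pIdx (i j : Fin n) : pVec i (pIdx j) = if j = i then 1 else 0 := by
  simp [pVec, Pi.single_apply, pIdx_inj]

lemma pVec_qIdx (i j : Fin n) : pVec i (qIdx j) = 0 := by
  simp [pVec, (pIdx_ne_qIdx _ _).symm]

lemma qVec_pIdx (i j : Fin n) : qVec i (pIdx j) = 0 := by
  simp [qVec, pIdx_ne_qIdx]

lemma qVec_qIdx (i j : Fin n) : qVec i (qIdx j) = if j = i then 1 else 0 := by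
  simp [qVec, Pi.single_apply, qIdx_inj]

lemma stdSymp_pVec_left (i : Fin n) (u : Fin (2 * n) → ℝ) :
    stdSymp n (pVec i) u = u (qIdx i) := by
  simp [stdSymp_eq_sum, pVec_pIdx, pVec_qIdx]

/-- The standard complex structure, which is compatible with `stdSymp`. -/
def stdComplex (n : ℕ) : (Fin (2 * n) → ℝ) →ₗ[ℝ] (Fin (2 * n) → ℝ) :=
  ∑ i, ((LinearMap.proj (pIdx i)).smulRight (qVec i) -
    (LinearMap.proj (qIdx i)).smulRight (pVec i))

lemma stdComplex_pIdx (u : Fin (2 * n) → ℝ) (i : Fin n) :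
    stdComplex n u (pIdx i) = -u (qIdx i) := by
  simp [stdComplex, pVec_pIdx, qVec_pIdx]

lemma stdComplex_qIdx (u : Fin (2 * n) → ℝ) (i : Fin n) :
    stdComplex n u (qIdx i) = u (pIdx i) := by
  simp [stdComplex, pVec_qIdx, qVec_qIdx]

lemma stdComplex_pVec (i : Fin n) : stdComplex n (pVec i) = qVec i := by
  refine ext_pIdx_qIdx (fun k ↦ ?_) fun k ↦ ?_
  · rw [stdComplex_pIdx, pVec_qIdx, qVec_pIdx, neg_zero]
  · rw [stdComplex_qIdx, pVec_pIdx, qVec_qIdx]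

lemma stdSymp_stdComplex_stdComplex (u v : Fin (2 * n) → ℝ) :
    stdSymp n (stdComplex n u) (stdComplex n v) = stdSymp n u v := by
  simp only [stdSymp_eq_sum, stdComplex_pIdx, stdComplex_qIdx]
  exact Finset.sum_congr rfl fun i _ ↦ by ring

lemma eq_zero_of_stdSymp_stdComplex_self {u : Fin (2 * n) → ℝ}
    (h : stdSymp n u (stdComplex n u) = 0) : u = 0 := by
  have hsum : ∑ i, (u (pIdx i) ^ 2 + u (qIdx i) ^ 2) = 0 := by
    rw [← h, stdSymp_eq_sum]
    exact Finset.sum_congr rfl fun i _ ↦ by rw [stdComplex_pIdx, stdComplex_qIdx]; ring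
  have hcoord (i : Fin n) : u (pIdx i) ^ 2 + u (qIdx i) ^ 2 = 0 :=
    (Finset.sum_eq_zero_iff_of_nonneg fun i _ ↦ by positivity).1 hsum i (Finset.mem_univ i)
  refine ext_pIdx_qIdx (fun i ↦ ?_) fun i ↦ ?_
  · exact pow_eq_zero_iff two_ne_zero |>.1 (by nlinarith [hcoord i, sq_nonneg (u (qIdx i))])
  · exact pow_eq_zero_iff two_ne_zero |>.1 (by nlinarith [hcoord i, sq_nonneg (u (pIdx i))])

/-- A subspace on which the standard symplectic form vanishes identically. -/
def IsIsotropic (W : Submodule ℝ (Fin (2 * n) → ℝ)) : Prop :=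
  ∀ u ∈ W, ∀ v ∈ W, stdSymp n u v = 0

variable {V W : Submodule ℝ (Fin (2 * n) → ℝ)}

lemma stdSymp_eq_stdSymp_of_isIsotropic {u v u' v' : Fin (2 * n) → ℝ} (hW : IsIsotropic W)
    (hV : IsIsotropic V) (hu : u ∈ W) (hv : v ∈ W) (hu' : u' - u ∈ V) (hv' : v' - v ∈ V)
    (h : stdSymp n u' v' = 0) : stdSymp n u v' = stdSymp n v u' := by
  have huv := hW u hu v hv
  have hV0 := hV _ hu' _ hv'
  obtain ⟨r, rfl⟩ : ∃ r, u' = u + r := ⟨u' - u, by abel⟩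
  obtain ⟨s, rfl⟩ : ∃ s, v' = v + s := ⟨v' - v, by abel⟩
  simp only [add_sub_cancel_left, stdSymp_add_left, stdSymp_add_right] at *
  linarith [stdSymp_swap v u, stdSymp_swap v r]

lemma isIsotropic_map_stdComplex (hW : IsIsotropic W) : IsIsotropic (W.map (stdComplex n)) := by
  rintro _ ⟨u, hu, rfl⟩ _ ⟨v, hv, rfl⟩
  rw [stdSymp_stdComplex_stdComplex]
  exact hW u hu v hv

lemma disjoint_map_stdComplex (hW : IsIsotropic W) : Disjoint W (W.map (stdComplex n)) := by
  rw [Submodule.disjoint_def]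
  rintro _ hw ⟨u, hu, rfl⟩
  rw [eq_zero_of_stdSymp_stdComplex_self (hW u hu _ hw), map_zero]

lemma stdComplex_injective : Function.Injective (stdComplex n) := by
  refine (injective_iff_map_eq_zero _).2 fun u hu ↦ eq_zero_of_stdSymp_stdComplex_self ?_
  simp [hu, stdSymp_eq_sum]

theorem exists_rightInverse_range_eq_map_stdComplex
    {A : (Fin (2 * n) → ℝ) →L[ℝ] (Fin n → ℝ)} (hA : IsIsotropic A.ker) :
    ∃ R : (Fin n → ℝ) →L[ℝ] (Fin (2 * n) → ℝ),
      (∀ z, A (R z) = z) ∧ R.range = A.ker.map (stdComplex n) := by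
  let T : A.ker.map (stdComplex n) →ₗ[ℝ] (Fin n → ℝ) := A.toLinearMap.domRestrict _
  have hinj : Function.Injective T := by
    refine (injective_iff_map_eq_zero T).2 fun w hw ↦ Subtype.ext ?_
    exact Submodule.disjoint_def.1 (disjoint_map_stdComplex hA) w hw w.2
  have hfinrank : Module.finrank ℝ (A.ker.map (stdComplex n)) = Module.finrank ℝ (Fin n → ℝ) := by
    refine (LinearMap.finrank_le_finrank_of_injective hinj).antisymm ?_
    have hmap : Module.finrank ℝ (A.ker.map (stdComplex n)) = Module.finrank ℝ A.ker :=
      (Submodule.equivMapOfInjective _ stdComplex_injective A.ker).finrank_eq.symm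
    have hrank := A.toLinearMap.finrank_range_add_finrank_ker
    have hrange := Submodule.finrank_le A.range
    simp only [Module.finrank_fin_fun] at *
    omega
  let e := LinearEquiv.ofInjectiveOfFinrankEq T hinj hfinrank
  refine ⟨LinearMap.toContinuousLinearMap (Submodule.subtype _ ∘ₗ e.symm.toLinearMap), ?_, ?_⟩
  · exact fun z ↦ e.apply_symm_apply z
  · simp [LinearMap.range_comp]

end SymplecticLinearAlgebra

section ProjectionGerm

open Filter Topology Asymptotics

variable {E F : Type*} [NormedAddCommGroup E] [NormedSpace ℝ E] [NormedAddCommGroup F]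
  [NormedSpace ℝ F] {H : E → F} {A : E →L[ℝ] F} {R : F →L[ℝ] E} {G : E → E}

/-- `G` is the germ at `0` of a smooth projection along the subspace `R.range` onto the zero set of
`H`, and it moves each point by at most a multiple of the value of `H` there. -/
structure IsProjectionGerm (H : E → F) (R : F →L[ℝ] E) (G : E → E) : Prop where
  contDiffAt : ContDiffAt ℝ ∞ G 0
  map_zero : G 0 = 0
  map_mem_zeros : ∀ᶠ x in 𝓝 0, H (G x) = 0
  map_add_range : ∀ x z, G (x + R z) = G x
  sub_mem_range : ∀ᶠ x in 𝓝 0, G x - x ∈ R.range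
  sub_isBigO : (fun x ↦ G x - x) =O[𝓝 0] H

lemma exists_localInverse_of_hasFDerivAt_id [CompleteSpace E] {Φ : E → E}
    (hΦ : ContDiffAt ℝ ∞ Φ 0) (hΦ' : HasFDerivAt Φ (ContinuousLinearMap.id ℝ E) 0)
    (hΦ0 : Φ 0 = 0) :
    ∃ Ψ : E → E, ContDiffAt ℝ ∞ Ψ 0 ∧ Ψ 0 = 0 ∧ (∀ᶠ y in 𝓝 0, Φ (Ψ y) = y) ∧
      ∀ᶠ x in 𝓝 0, Ψ (Φ x) = x := by
  have hd : HasFDerivAt Φ (ContinuousLinearEquiv.refl ℝ E : E →L[ℝ] E) 0 := hΦ'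
  have hstrict := hΦ.hasStrictFDerivAt' hd (by simp)
  have hsmooth := hΦ.to_localInverse hd (by simp)
  have hzero := hstrict.localInverse_apply_image
  have hright := hstrict.eventually_right_inverse
  rw [hΦ0] at hsmooth hzero hright
  exact ⟨_, hsmooth, hzero, hright, hstrict.eventually_left_inverse⟩

/-- `Φ x = x + R (H x - A x)` satisfies `A ∘ Φ = H`, so its inverse `Ψ` carries the kernel of `A` to
the zero set of `H`. -/
theorem exists_isProjectionGerm [CompleteSpace E] (hH : ContDiffAt ℝ ∞ H 0) (hH0 : H 0 = 0)
    (hA : HasFDerivAt H A 0) (hAR : ∀ z, A (R z) = z) : ∃ G, IsProjectionGerm H R G := by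
  let Φ (x : E) : E := x + R (H x - A x)
  have hΦ : ContDiffAt ℝ ∞ Φ 0 := by fun_prop
  have hΦ' : HasFDerivAt Φ (ContinuousLinearMap.id ℝ E) 0 :=
    ((hasFDerivAt_id 0).add (R.hasFDerivAt.comp 0 (hA.sub A.hasFDerivAt))).congr_fderiv (by simp)
  obtain ⟨Ψ, hΨ, hΨ0, hright, hleft⟩ :=
    exists_localInverse_of_hasFDerivAt_id hΦ hΦ' (by simp [Φ, hH0])
  have hAΦ (x : E) : A (Φ x) = H x := by simp [Φ, hAR]
  let π (x : E) : E := x - R (A x)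
  have hπ0 : π 0 = 0 := by simp [π]
  have hπ : Tendsto π (𝓝 0) (𝓝 0) := by
    simpa [hπ0] using (show Continuous π by fun_prop).tendsto 0
  have hΦ_tendsto : Tendsto Φ (𝓝 0) (𝓝 0) := by simpa [Φ, hH0] using hΦ.continuousAt.tendsto
  refine ⟨fun x ↦ Ψ (π x), ?_, by simp [hπ0, hΨ0], ?_, fun x z ↦ ?_, ?_, ?_⟩
  · exact ContDiffAt.comp 0 (by rwa [hπ0]) (by fun_prop)
  · filter_upwards [hπ.eventually hright] with x hx
    rw [← hAΦ, hx]
    simp [π, hAR]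
  · simp [π, hAR]
  · filter_upwards [hπ.eventually hright] with x hx
    refine ⟨-A x - (H (Ψ (π x)) - A (Ψ (π x))), ?_⟩
    rw [ContinuousLinearMap.coe_coe, map_sub, map_neg, ← sub_eq_of_eq_add' hx.symm]
    simp only [π]
    abel
  · have hLip : (fun x ↦ Ψ (π x) - Ψ (Φ x)) =O[𝓝 0] fun x ↦ π x - Φ x :=
      (hΨ.hasStrictFDerivAt (by simp)).isBigO_sub.comp_tendsto
        (by simpa [nhds_prod_eq] using hπ.prodMk hΦ_tendsto)
    have hRH : (fun x ↦ π x - Φ x) =O[𝓝 0] H :=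
      ((R.isBigO_comp H _).neg_left).congr_left fun x ↦ by
        simp only [π, Φ, map_sub]
        abel
    refine (hLip.trans hRH).congr' ?_ EventuallyEq.rfl
    filter_upwards [hleft] with x hx
    rw [hx]

namespace IsProjectionGerm

lemma tendsto (hG : IsProjectionGerm H R G) : Tendsto G (𝓝 0) (𝓝 0) := by
  simpa [hG.map_zero] using hG.contDiffAt.continuousAt.tendsto

lemma eventually_differentiableAt (hG : IsProjectionGerm H R G) :
    ∀ᶠ x in 𝓝 0, DifferentiableAt ℝ G x := by
  filter_upwards [(contDiffAt_infty.1 hG.contDiffAt 1).eventually (by simp)] with x hx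
  exact hx.differentiableAt (by simp)

lemma eventually_fderiv_mem_ker (hG : IsProjectionGerm H R G) (hH : Differentiable ℝ H) :
    ∀ᶠ x in 𝓝 0, ∀ v, fderiv ℝ G x v ∈ (fderiv ℝ H (G x)).ker := by
  filter_upwards [hG.map_mem_zeros.eventually_nhds, hG.eventually_differentiableAt]
    with x hx hdiff v
  have hzero : fderiv ℝ (H ∘ G) x = 0 := (EventuallyEq.fderiv_eq hx).trans (fderiv_const_apply 0)
  rw [fderiv_comp x (hH _) hdiff] at hzero
  exact congrArg (· v) hzero

lemma eventually_fderiv_sub_mem_range (hG : IsProjectionGerm H R G) (hAR : ∀ z, A (R z) = z) :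
    ∀ᶠ x in 𝓝 0, ∀ v, fderiv ℝ G x v - v ∈ R.range := by
  filter_upwards [hG.sub_mem_range.eventually_nhds, hG.eventually_differentiableAt]
    with x hx hdiff v
  have hd : HasFDerivAt (fun y ↦ G y - y) (fderiv ℝ G x - ContinuousLinearMap.id ℝ E) x :=
    hdiff.hasFDerivAt.sub (hasFDerivAt_id x)
  have hfix : (fun y ↦ G y - y) =ᶠ[𝓝 x] fun y ↦ R (A (G y - y)) := by
    filter_upwards [hx] with y hy
    obtain ⟨z, hz⟩ := hy
    rw [← hz, ContinuousLinearMap.coe_coe, hAR]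
  have hderiv := hd.unique (((R.comp A).hasFDerivAt.comp x hd).congr_of_eventuallyEq hfix)
  exact ⟨A (fderiv ℝ G x v - v), (congrArg (· v) hderiv).symm⟩

end IsProjectionGerm

end ProjectionGerm

section Lagrangian

open Filter Topology Asymptotics

variable {n : ℕ}

namespace LagrangianGerm

variable (L : LagrangianGerm n)

/-- The defining functions of a Lagrangian germ, bundled into one vector-valued map. -/
def toMap (x : Fin (2 * n) → ℝ) : Fin n → ℝ := fun i ↦ L.H i x

/-- The tangent space at `0` of a Lagrangian germ. -/
def tangentSpace : Submodule ℝ (Fin (2 * n) → ℝ) := (fderiv ℝ L.toMap 0).ker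

lemma contDiff_toMap : ContDiff ℝ ∞ L.toMap := contDiff_pi.2 L.smooth

lemma differentiable_toMap : Differentiable ℝ L.toMap := L.contDiff_toMap.differentiable (by simp)

lemma toMap_zero : L.toMap 0 = 0 := funext L.zero_at_zero

lemma mem_ker_fderiv_toMap {x v : Fin (2 * n) → ℝ} :
    v ∈ (fderiv ℝ L.toMap x).ker ↔ ∀ i, dirDeriv v (L.H i) x = 0 := by
  have hcoord (i : Fin n) : dirDeriv v (L.H i) x = fderiv ℝ L.toMap x v i :=
    dirDeriv_apply v (L.differentiable_toMap x) i
  simp only [hcoord, LinearMap.mem_ker, ContinuousLinearMap.coe_coe, funext_iff, Pi.zero_apply]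

lemma eventually_isIsotropic_ker_fderiv :
    ∀ᶠ x in 𝓝 0, L.toMap x = 0 → IsIsotropic (fderiv ℝ L.toMap x).ker := by
  obtain ⟨U, hUopen, hU0, hU⟩ := L.lagrangian
  filter_upwards [hUopen.mem_nhds hU0] with x hxU hx u hu v hv
  exact (hU x hxU (congrFun hx)).2 u v (L.mem_ker_fderiv_toMap.1 hu) (L.mem_ker_fderiv_toMap.1 hv)

lemma isIsotropic_tangentSpace : IsIsotropic L.tangentSpace :=
  L.eventually_isIsotropic_ker_fderiv.self_of_nhds L.toMap_zero

/-- The symmetry says that `L` is the graph of a closed one-form on its tangent space, the cotangent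
directions being the transverse Lagrangian subspace `R.range`. -/
theorem exists_projectionGerm :
    ∃ R G, IsProjectionGerm L.toMap R G ∧ R.range = L.tangentSpace.map (stdComplex n) ∧
      ∀ᶠ x in 𝓝 0, ∀ u ∈ L.tangentSpace, ∀ v ∈ L.tangentSpace,
        stdSymp n u (fderiv ℝ G x v) = stdSymp n v (fderiv ℝ G x u) := by
  obtain ⟨R, hAR, hrange⟩ :=
    exists_rightInverse_range_eq_map_stdComplex L.isIsotropic_tangentSpace
  obtain ⟨G, hG⟩ := exists_isProjectionGerm L.contDiff_toMap.contDiffAt L.toMap_zero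
    (L.differentiable_toMap 0).hasFDerivAt hAR
  refine ⟨R, G, hG, hrange, ?_⟩
  filter_upwards [hG.eventually_fderiv_mem_ker L.differentiable_toMap,
    hG.eventually_fderiv_sub_mem_range hAR, hG.map_mem_zeros,
    hG.tendsto.eventually L.eventually_isIsotropic_ker_fderiv] with x hker hsub hzero hiso u hu v hv
  rw [hrange] at hsub
  exact stdSymp_eq_stdSymp_of_isIsotropic L.isIsotropic_tangentSpace
    (isIsotropic_map_stdComplex L.isIsotropic_tangentSpace) hu hv (hsub u) (hsub v)
    (hiso hzero _ (hker u) _ (hker v))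

end LagrangianGerm

lemma toMap_comp_isLittleO_of_lt_tOrd {f : ℝ → Fin (2 * n) → ℝ} {L : LagrangianGerm n} {k : ℕ}
    (hf : ContDiff ℝ ∞ f) (hf0 : f 0 = 0) (hk : k < tOrd f L) :
    (fun t ↦ L.toMap (f t)) =o[𝓝 0] fun t ↦ t ^ k := by
  refine isLittleO_pi.2 fun i ↦ isLittleO_pow_of_lt_vanishOrder ?_ ?_ ?_
  · exact contDiffAt_infty.1 ((L.smooth i).comp hf).contDiffAt k
  · simp [hf0, L.toMap_zero]
  · exact hk.trans_le (iInf_le _ i)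

end Lagrangian

section UpperBound

open Filter Topology Asymptotics

variable {n : ℕ}

/-- The common form of the branches `B₁` and `B₂`: a cusp in the `(pᵢ, pⱼ)`-plane, with the
coordinate `qᵢ` deformed to `κ * t ^ 6`. -/
def cuspBranch (i j : Fin n) (κ t : ℝ) : Fin (2 * n) → ℝ :=
  cusp (pVec i) (pVec j) t + (κ * t ^ 6) • qVec i

variable {i j k : Fin n} {κ κ' : ℝ} {L : LagrangianGerm n}

lemma contDiff_cuspBranch : ContDiff ℝ ∞ (cuspBranch i j κ) := by
  have hcusp := contDiff_cusp (pVec i) (pVec j) (n := ∞)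
  unfold cuspBranch
  fun_prop

lemma cuspBranch_zero : cuspBranch i j κ 0 = 0 := by simp [cuspBranch, cusp_zero]

lemma tendsto_cuspBranch : Tendsto (cuspBranch i j κ) (𝓝 0) (𝓝 0) := by
  simpa [cuspBranch_zero] using (contDiff_cuspBranch (κ := κ)).continuous.tendsto 0

lemma cuspBranch_pIdx (l : Fin n) (t : ℝ) :
    cuspBranch i j κ t (pIdx l) = (if l = i then t ^ 3 else 0) - if l = j then t ^ 2 else 0 := by
  simp [cuspBranch, cusp, pVec_pIdx, qVec_pIdx]

lemma cuspBranch_qIdx (l : Fin n) (t : ℝ) :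
    cuspBranch i j κ t (qIdx l) = if l = i then κ * t ^ 6 else 0 := by
  simp [cuspBranch, cusp, pVec_qIdx, qVec_qIdx]

lemma cuspBranch_sub_cusp_isBigO :
    (fun t ↦ cuspBranch i j κ t - cusp (pVec i) (pVec j) t) =O[𝓝 0] fun t ↦ t ^ 6 := by
  have h : (fun t : ℝ ↦ t ^ 6 • (κ • qVec i)) =O[𝓝 0] fun t ↦ t ^ 6 • (1 : ℝ) :=
    (isBigO_refl _ _).smul (isBigO_const_const _ one_ne_zero _)
  refine h.congr (fun t ↦ ?_) fun t ↦ by simp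
  rw [cuspBranch, add_sub_cancel_left, smul_smul, mul_comm κ]

lemma pVec_mem_tangentSpace_of_isLittleO
    (h : (fun t ↦ L.toMap (cuspBranch i j κ t)) =o[𝓝 0] fun t ↦ t ^ 3) :
    pVec i ∈ L.tangentSpace ∧ pVec j ∈ L.tangentSpace := by
  have hdirDeriv (l : Fin n) :
      dirDeriv (pVec i) (L.H l) 0 = 0 ∧ dirDeriv (pVec j) (L.H l) 0 = 0 := by
    have hsmooth : ContDiffAt ℝ ∞ (L.H l) 0 := (L.smooth l).contDiffAt
    refine dirDeriv_eq_zero_of_comp_cusp_isLittleO hsmooth ?_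
    have hdiff : (fun t ↦ L.H l (cuspBranch i j κ t) - L.H l (cusp (pVec i) (pVec j) t))
        =o[𝓝 0] fun t ↦ t ^ 3 :=
      (((hsmooth.hasStrictFDerivAt (by simp)).isBigO_sub.comp_tendsto
        (tendsto_cuspBranch.prodMk_nhds (tendsto_cusp _ _))).trans
          cuspBranch_sub_cusp_isBigO).trans_isLittleO (isLittleO_pow_pow (by norm_num))
    exact ((isLittleO_pi.1 h l).sub hdiff).congr_left fun t ↦ sub_sub_cancel _ _
  exact ⟨L.mem_ker_fderiv_toMap.2 fun l ↦ (hdirDeriv l).1,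
    L.mem_ker_fderiv_toMap.2 fun l ↦ (hdirDeriv l).2⟩

lemma IsProjectionGerm.comp_cusp_sub_cuspBranch_isLittleO {F : Type*}
    [NormedAddCommGroup F] [NormedSpace ℝ F] {H : (Fin (2 * n) → ℝ) → F}
    {R : F →L[ℝ] (Fin (2 * n) → ℝ)} {G : (Fin (2 * n) → ℝ) → Fin (2 * n) → ℝ} {m : ℕ}
    (hG : IsProjectionGerm H R G) (hq : qVec i ∈ R.range)
    (h : (fun t ↦ H (cuspBranch i j κ t)) =o[𝓝 0] fun t ↦ t ^ m) :
    (fun t ↦ G (cusp (pVec i) (pVec j) t) - cuspBranch i j κ t) =o[𝓝 0] fun t ↦ t ^ m := by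
  refine ((hG.sub_isBigO.comp_tendsto tendsto_cuspBranch).trans_isLittleO h).congr_left fun t ↦ ?_
  obtain ⟨z, hz⟩ := R.range.smul_mem (κ * t ^ 6) hq
  simp only [Function.comp_apply, cuspBranch, ← hz]
  rw [ContinuousLinearMap.coe_coe, hG.map_add_range]

lemma dirDeriv_dirDeriv_projectionGerm
    {R : (Fin n → ℝ) →L[ℝ] (Fin (2 * n) → ℝ)} {G : (Fin (2 * n) → ℝ) → Fin (2 * n) → ℝ}
    (hG : IsProjectionGerm L.toMap R G) (hrange : R.range = L.tangentSpace.map (stdComplex n))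
    (hsymm : ∀ᶠ x in 𝓝 0, ∀ u ∈ L.tangentSpace, ∀ v ∈ L.tangentSpace,
      stdSymp n u (fderiv ℝ G x v) = stdSymp n v (fderiv ℝ G x u))
    (hij : i ≠ j) (h : (fun t ↦ L.toMap (cuspBranch i j κ t)) =o[𝓝 0] fun t ↦ t ^ 7) :
    dirDeriv (pVec i) (dirDeriv (pVec i) fun x ↦ G x (qIdx i)) 0 = 2 * κ := by
  obtain ⟨hi, hj⟩ := pVec_mem_tangentSpace_of_isLittleO (h.trans (isLittleO_pow_pow (by norm_num)))
  have hq : qVec i ∈ R.range := by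
    rw [hrange, ← stdComplex_pVec]
    exact Submodule.mem_map_of_mem hi
  have hnear := hG.comp_cusp_sub_cuspBranch_isLittleO hq h
  have hsmooth (l : Fin (2 * n)) : ContDiffAt ℝ ∞ (fun x ↦ G x l) 0 :=
    contDiffAt_pi.1 hG.contDiffAt l
  refine dirDeriv_dirDeriv_eq_of_comp_cusp_isLittleO (b := pVec j) (hsmooth (qIdx i))
    (hsmooth (qIdx j)) ?_ ?_ ?_
  · filter_upwards [hsymm, hG.eventually_differentiableAt] with x hx hdiff
    simpa only [dirDeriv_apply _ hdiff, stdSymp_pVec_left] using hx _ hi _ hj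
  · refine ((isLittleO_pi.1 hnear (qIdx i)).trans (isLittleO_pow_pow (by norm_num))).congr_left
      fun t ↦ ?_
    simp [cuspBranch_qIdx]
  · refine (isLittleO_pi.1 hnear (qIdx j)).congr_left fun t ↦ ?_
    simp [cuspBranch_qIdx, hij.symm]

theorem eq_of_toMap_cuspBranch_isLittleO (hij : i ≠ j) (hik : i ≠ k)
    (h : (fun t ↦ L.toMap (cuspBranch i j κ t)) =o[𝓝 0] fun t ↦ t ^ 7)
    (h' : (fun t ↦ L.toMap (cuspBranch i k κ' t)) =o[𝓝 0] fun t ↦ t ^ 7) : κ = κ' := by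
  obtain ⟨R, G, hG, hrange, hsymm⟩ := L.exists_projectionGerm
  have hκ := dirDeriv_dirDeriv_projectionGerm hG hrange hsymm hij h
  have hκ' := dirDeriv_dirDeriv_projectionGerm hG hrange hsymm hik h'
  linarith

theorem Lt2_cuspBranch_le (hij : i ≠ j) (hik : i ≠ k) (hκ : κ ≠ κ') :
    Lt2 (cuspBranch i j κ) (cuspBranch i k κ') ≤ 7 := by
  refine iSup_le fun L ↦ not_lt.1 fun hlt ↦ hκ ?_
  obtain ⟨hlt, hlt'⟩ := lt_min_iff.1 hlt
  exact eq_of_toMap_cuspBranch_isLittleO hij hik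
    (toMap_comp_isLittleO_of_lt_tOrd contDiff_cuspBranch cuspBranch_zero hlt)
    (toMap_comp_isLittleO_of_lt_tOrd contDiff_cuspBranch cuspBranch_zero hlt')

end UpperBound

section LowerBound

variable {n : ℕ}

lemma clm_apply_eq_sum_mul {ι : Type*} [Fintype ι] [DecidableEq ι] (T : (ι → ℝ) →L[ℝ] ℝ)
    (w : ι → ℝ) : T w = ∑ i, w i * T (Pi.single i 1) := by
  conv_lhs => rw [pi_eq_sum_univ' w]
  simp [map_sum]

/-- The projection onto the coordinates `p₁, …, pₙ`. -/
def pProj (n : ℕ) : (Fin (2 * n) → ℝ) →L[ℝ] (Fin n → ℝ) :=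
  ContinuousLinearMap.pi fun i ↦ ContinuousLinearMap.proj (pIdx i)

lemma pProj_apply (x : Fin (2 * n) → ℝ) (i : Fin n) : pProj n x i = x (pIdx i) := rfl

lemma pProj_qVec (i : Fin n) : pProj n (qVec i) = 0 := by
  ext k
  simp [pProj_apply, qVec_pIdx]

variable {S : (Fin n → ℝ) → ℝ}

/-- The `i`-th equation `qᵢ = ∂S/∂pᵢ` of the graph of the gradient of `S`. -/
def gradGraphEq (S : (Fin n → ℝ) → ℝ) (i : Fin n) (x : Fin (2 * n) → ℝ) : ℝ :=
  x (qIdx i) - dirDeriv (Pi.single i 1) S (pProj n x)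

lemma contDiff_gradGraphEq (hS : ContDiff ℝ ∞ S) (i : Fin n) :
    ContDiff ℝ ∞ (gradGraphEq S i) := by
  have hgrad := contDiff_dirDeriv (Pi.single i 1) hS
  unfold gradGraphEq
  fun_prop

lemma fderiv_gradGraphEq (hS : ContDiff ℝ ∞ S) (i : Fin n) (x u : Fin (2 * n) → ℝ) :
    fderiv ℝ (gradGraphEq S i) x u =
      u (qIdx i) - fderiv ℝ (fderiv ℝ S) (pProj n x) (pProj n u) (Pi.single i 1) := by
  have hgrad := ((contDiff_dirDeriv (Pi.single i 1) hS).differentiable (by simp)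
    (pProj n x)).hasFDerivAt.comp x (pProj n).hasFDerivAt
  have hderiv : HasFDerivAt (gradGraphEq S i) _ x := (hasFDerivAt_apply (qIdx i) x).sub hgrad
  rw [hderiv.fderiv, ← dirDeriv_dirDeriv _ _ (contDiff_infty.1 hS 2).contDiffAt]
  rfl

lemma linearIndependent_fderiv_gradGraphEq (hS : ContDiff ℝ ∞ S) (x : Fin (2 * n) → ℝ) :
    LinearIndependent ℝ fun i ↦ fderiv ℝ (gradGraphEq S i) x := by
  refine Fintype.linearIndependent_iff.2 fun c hc i ↦ ?_
  simpa [fderiv_gradGraphEq hS, pProj_qVec, qVec_qIdx] using congrArg (· (qVec i)) hc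

lemma stdSymp_eq_zero_of_fderiv_gradGraphEq (hS : ContDiff ℝ ∞ S) {x u v : Fin (2 * n) → ℝ}
    (hu : ∀ i, fderiv ℝ (gradGraphEq S i) x u = 0)
    (hv : ∀ i, fderiv ℝ (gradGraphEq S i) x v = 0) : stdSymp n u v = 0 := by
  let D := fderiv ℝ (fderiv ℝ S) (pProj n x)
  have hsymm : D (pProj n v) (pProj n u) = D (pProj n u) (pProj n v) :=
    (contDiff_infty.1 hS 2).contDiffAt.isSymmSndFDerivAt (by simp) _ _
  simp only [fderiv_gradGraphEq hS, sub_eq_zero] at hu hv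
  calc stdSymp n u v
      = ∑ i, pProj n u i * D (pProj n v) (Pi.single i 1) -
          ∑ i, pProj n v i * D (pProj n u) (Pi.single i 1) := by
        simp only [stdSymp_eq_sum, hu, hv, Finset.sum_sub_distrib, pProj_apply, mul_comm, D]
    _ = 0 := by
        rw [← clm_apply_eq_sum_mul, ← clm_apply_eq_sum_mul, hsymm, sub_self]

/-- The germ at `0` of the graph of the gradient of `S`. -/
def gradGraph (hS : ContDiff ℝ ∞ S) (hS0 : fderiv ℝ S 0 = 0) : LagrangianGerm n where
  H := gradGraphEq S
  smooth := contDiff_gradGraphEq hS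
  zero_at_zero i := by simp [gradGraphEq, dirDeriv, hS0]
  lagrangian := ⟨Set.univ, isOpen_univ, Set.mem_univ 0, fun x _ _ ↦
    ⟨linearIndependent_fderiv_gradGraphEq hS x, fun _ _ ↦
      stdSymp_eq_zero_of_fderiv_gradGraphEq hS⟩⟩

/-- A generating function for germs with high contact to cusp branches. Along
`(xᵢ, xⱼ) = (t ^ 3, -t ^ 2)` its gradient is `((b - a) * t ^ 6, 3 * a * t ^ 7)`, so the mixed term
changes the coefficient of `t ^ 6` at the cost of an error of order `t ^ 7`. -/
def cuspPotential (i j : Fin n) (a b : ℝ) (x : Fin n → ℝ) : ℝ :=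
  a * (x i * x j ^ 3) + b / 3 * x i ^ 3

variable {i j k : Fin n} {a b κ κ' : ℝ}

lemma contDiff_cuspPotential : ContDiff ℝ ∞ (cuspPotential i j a b) := by
  unfold cuspPotential
  fun_prop

lemma dirDeriv_cuspPotential (v x : Fin n → ℝ) :
    dirDeriv v (cuspPotential i j a b) x =
      v i * (a * x j ^ 3 + b * x i ^ 2) + v j * (3 * a * x i * x j ^ 2) := by
  have hcoord (l : Fin n) : HasFDerivAt (𝕜 := ℝ) (fun y : Fin n → ℝ ↦ y l) _ x :=
    hasFDerivAt_apply l x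
  have hderiv : HasFDerivAt (cuspPotential i j a b) _ x :=
    (((hcoord i).mul ((hcoord j).pow 3)).const_mul a).add (((hcoord i).pow 3).const_mul (b / 3))
  rw [dirDeriv, hderiv.fderiv]
  simp only [Nat.add_one_sub_one, nsmul_eq_mul, Nat.cast_ofNat, smul_add, add_apply, smul_apply,
    ContinuousLinearMap.proj_apply, smul_eq_mul]
  ring

lemma fderiv_cuspPotential_zero : fderiv ℝ (cuspPotential i j a b) 0 = 0 := by
  ext v
  simpa [dirDeriv] using dirDeriv_cuspPotential (i := i) (j := j) (a := a) (b := b) v 0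

/-- The Lagrangian germ generated by `cuspPotential`. -/
def cuspGerm (i j : Fin n) (a b : ℝ) : LagrangianGerm n :=
  gradGraph (contDiff_cuspPotential (i := i) (j := j) (a := a) (b := b)) fderiv_cuspPotential_zero

lemma cuspGerm_H_cuspBranch (hij : i ≠ j) (hik : i ≠ k) (l : Fin n) (t : ℝ) :
    (cuspGerm i j a b).H l (cuspBranch i k κ t) =
      (if l = i then κ - b + (if k = j then a else 0) else 0) * t ^ 6 -
      (if l = j ∧ k = j then 3 * a else 0) * t ^ 7 := by
  change gradGraphEq (cuspPotential i j a b) l _ = _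
  rw [gradGraphEq, dirDeriv_cuspPotential]
  simp only [pProj_apply, cuspBranch_pIdx, cuspBranch_qIdx, Pi.single_apply]
  grind

lemma seven_le_tOrd_cuspGerm (hij : i ≠ j) :
    7 ≤ tOrd (cuspBranch i j κ) (cuspGerm i j a (κ + a)) := by
  refine le_iInf fun l ↦ ?_
  have hH : (fun t ↦ (cuspGerm i j a (κ + a)).H l (cuspBranch i j κ t)) =
      fun t ↦ (if l = j then -3 * a else 0) * t ^ 7 := by
    ext t
    rw [cuspGerm_H_cuspBranch hij hij]
    split_ifs <;> simp_all
  rw [hH]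
  exact le_vanishOrder_const_mul_pow _ 7

lemma tOrd_cuspGerm_eq_top (hij : i ≠ j) (hik : i ≠ k) (h : k = j → a = 0) :
    tOrd (cuspBranch i k κ) (cuspGerm i j a κ) = ⊤ := by
  refine iInf_eq_top.2 fun l ↦ ?_
  have hH : (fun t ↦ (cuspGerm i j a κ).H l (cuspBranch i k κ t)) = fun _ ↦ 0 := by
    ext t
    rw [cuspGerm_H_cuspBranch hij hik]
    split_ifs <;> simp_all
  rw [hH, vanishOrder_zero]

theorem Lt1_cuspBranch (hij : i ≠ j) : Lt1 (cuspBranch i j κ) = ⊤ :=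
  top_le_iff.1 <| (tOrd_cuspGerm_eq_top hij hij fun _ ↦ rfl).ge.trans
    (le_iSup (tOrd (cuspBranch i j κ)) (cuspGerm i j 0 κ))

theorem seven_le_Lt2_cuspBranch (hij : i ≠ j) (hik : i ≠ k) (hjk : j ≠ k) :
    7 ≤ Lt2 (cuspBranch i j κ) (cuspBranch i k κ') := by
  refine le_iSup_of_le (cuspGerm i j (κ' - κ) κ') (le_min ?_ ?_)
  · simpa using seven_le_tOrd_cuspGerm (κ := κ) (a := κ' - κ) hij
  · rw [tOrd_cuspGerm_eq_top hij hik fun h ↦ absurd h.symm hjk]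
    exact le_top

theorem Lt2_cuspBranch (hij : i ≠ j) (hik : i ≠ k) (hjk : j ≠ k) (hκ : κ ≠ κ') :
    Lt2 (cuspBranch i j κ) (cuspBranch i k κ') = 7 :=
  (Lt2_cuspBranch_le hij hik hκ).antisymm (seven_le_Lt2_cuspBranch hij hik hjk)

end LowerBound

section Branches

variable {n : ℕ}

lemma firstBranch_eq_cuspBranch (hn : 3 ≤ n) :
    (fun (t : ℝ) (j : Fin (2 * n)) ↦ if (j : ℕ) = 0 then t ^ 3
      else if (j : ℕ) = 1 then -(1 / 3) * t ^ 6 else if (j : ℕ) = 4 then -t ^ 2 else (0 : ℝ)) =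
      cuspBranch ⟨0, by omega⟩ ⟨2, by omega⟩ (-(1 / 3)) := by
  refine funext fun t ↦ ext_pIdx_qIdx (fun l ↦ ?_) fun l ↦ ?_
  · grind [cuspBranch_pIdx, pIdx]
  · grind [cuspBranch_qIdx, qIdx]

lemma secondBranch_eq_cuspBranch (hn : 2 ≤ n) :
    (fun (t : ℝ) (j : Fin (2 * n)) ↦ if (j : ℕ) = 0 then t ^ 3
      else if (j : ℕ) = 2 then -t ^ 2 else (0 : ℝ)) =
      cuspBranch ⟨0, by omega⟩ ⟨1, by omega⟩ 0 := by
  refine funext fun t ↦ ext_pIdx_qIdx (fun l ↦ ?_) fun l ↦ ?_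
  · grind [cuspBranch_pIdx, pIdx]
  · grind [cuspBranch_qIdx, qIdx]

end Branches

/-- Lagrangian tangency orders for the class `(T₇)⁶`. -/
theorem T7_6_lagrangian_tangency_orders
    (n : ℕ) (hn : 3 ≤ n)
    (B₁ B₂ : ℝ → Fin (2 * n) → ℝ)
    (hB₁ : B₁ = fun (t : ℝ) (j : Fin (2 * n)) => if (j : ℕ) = 0 then t ^ 3 else if (j : ℕ) = 1 then -(1 / 3) * t ^ 6 else if (j : ℕ) = 4 then -t ^ 2 else (0 : ℝ))
    (hB₂ : B₂ = fun (t : ℝ) (j : Fin (2 * n)) => if (j : ℕ) = 0 then t ^ 3 else if (j : ℕ) = 2 then -t ^ 2 else (0 : ℝ)) :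
    Lt2 B₁ B₂ = 7 ∧ Lt1 B₁ = ⊤ ∧ Lt1 B₂ = ⊤ := by
  rw [firstBranch_eq_cuspBranch hn] at hB₁
  rw [secondBranch_eq_cuspBranch (by omega)] at hB₂
  subst hB₁ hB₂
  exact ⟨Lt2_cuspBranch (by simp) (by simp) (by simp) (by norm_num),
    Lt1_cuspBranch (by simp), Lt1_cuspBranch (by simp)⟩

end
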